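/- Let 𝒰 ⊆ B(K₁,L₁) and 𝒱 ⊆ B(H₂,K₂) be ternary rings of operators, and let φ : 𝒰 → B(K,L) and ψ : 𝒱 → B(H,K) be ternary morphisms that semi-commute. Then for every p ∈ ℕ and all elements u_{i,j} ∈ 𝒰 and v_{i,j} ∈ 𝒱 (i ∈ {1,2,3}, j ∈ {1,…,p}), one has Σ_{j,k,l=1}^p φ(u_{1,j} u_{2,k}* u_{3,l}) ψ(v_{1,j} v_{2,k}* v_{3,l}) = (Σ_{j=1}^p φ(u_{1,j})ψ(v_{1,j})) (Σ_{k=1}^p φ(u_{2,k})ψ(v_{2,k}))* (Σ_{l=1}^p φ(u_{3,l})ψ(v_{3,l})). In particular, the map u ⊗ v ↦ φ(u)ψ(v) on the algebraic tensor product 𝒰 ⊗ 𝒱 is a ternary morphism with respect to the entrywise triple product. -/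

import Mathlib

open ContinuousLinearMap

/-- A linear map `φ` on a TRO `𝒰 ⊆ B(K₀, L₀)` is a ternary morphism if it
satisfies `φ(S T* R) = φ(S) φ(T)* φ(R)` for all `S, T, R ∈ 𝒰`. -/
def IsTernaryHom
    {K₀ L₀ K L : Type*}
    [NormedAddCommGroup K₀] [InnerProductSpace ℂ K₀] [CompleteSpace K₀]
    [NormedAddCommGroup L₀] [InnerProductSpace ℂ L₀] [CompleteSpace L₀]
    [NormedAddCommGroup K] [InnerProductSpace ℂ K] [CompleteSpace K]
    [NormedAddCommGroup L] [InnerProductSpace ℂ L] [CompleteSpace L]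
    (𝒰 : Submodule ℂ (K₀ →L[ℂ] L₀)) (φ : ↥𝒰 →ₗ[ℂ] (K →L[ℂ] L)) : Prop :=
  ∀ (s t r : 𝒰)
    (h : (s : K₀ →L[ℂ] L₀) ∘L (adjoint (t : K₀ →L[ℂ] L₀)) ∘L (r : K₀ →L[ℂ] L₀) ∈ 𝒰),
    φ ⟨(s : K₀ →L[ℂ] L₀) ∘L (adjoint (t : K₀ →L[ℂ] L₀)) ∘L (r : K₀ →L[ℂ] L₀), h⟩
      = φ s ∘L (adjoint (φ t)) ∘L φ r

/-- Semi-commutation of two families of operators `φ i : K → L` and `ψ j : H → K`: every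
`φ(i₁)* φ(i₂)` commutes with every `ψ(j₁) ψ(j₂)*`. The index types are arbitrary; for
ternary morphisms they are the TROs on which the morphisms are defined. -/
def SemiCommute {𝕜 ι κ H K L : Type*} [RCLike 𝕜]
    [NormedAddCommGroup H] [InnerProductSpace 𝕜 H] [CompleteSpace H]
    [NormedAddCommGroup K] [InnerProductSpace 𝕜 K] [CompleteSpace K]
    [NormedAddCommGroup L] [InnerProductSpace 𝕜 L] [CompleteSpace L]
    (φ : ι → K →L[𝕜] L) (ψ : κ → H →L[𝕜] K) : Prop :=
  ∀ (i₁ i₂ : ι) (j₁ j₂ : κ), Commute (adjoint (φ i₁) ∘L φ i₂) (ψ j₁ ∘L adjoint (ψ j₂))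

section TripleProduct

variable {𝕜 E F G K M : Type*} [RCLike 𝕜]
  [NormedAddCommGroup E] [NormedSpace 𝕜 E] [NormedAddCommGroup F] [NormedSpace 𝕜 F]
  [NormedAddCommGroup G] [InnerProductSpace 𝕜 G] [CompleteSpace G]
  [NormedAddCommGroup K] [InnerProductSpace 𝕜 K] [CompleteSpace K]
  [NormedAddCommGroup M] [InnerProductSpace 𝕜 M] [CompleteSpace M]

theorem triple_comp_triple_of_commute {B C : K →L[𝕜] M} {X Y : G →L[𝕜] K}
    (h : Commute (adjoint B ∘L C) (X ∘L adjoint Y)) (A : K →L[𝕜] F) (Z : E →L[𝕜] K) :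
    (A ∘L adjoint B ∘L C) ∘L (X ∘L adjoint Y ∘L Z) =
      (A ∘L X) ∘L adjoint (B ∘L Y) ∘L (C ∘L Z) := by
  have h_comp : (adjoint B ∘L C) ∘L (X ∘L adjoint Y) = (X ∘L adjoint Y) ∘L (adjoint B ∘L C) := h.eq
  calc (A ∘L adjoint B ∘L C) ∘L (X ∘L adjoint Y ∘L Z)
      = A ∘L ((adjoint B ∘L C) ∘L (X ∘L adjoint Y)) ∘L Z := by simp only [comp_assoc]
    _ = A ∘L ((X ∘L adjoint Y) ∘L (adjoint B ∘L C)) ∘L Z := by rw [h_comp]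
    _ = (A ∘L X) ∘L adjoint (B ∘L Y) ∘L (C ∘L Z) := by simp only [adjoint_comp, comp_assoc]

theorem sum_comp_adjoint_sum_comp_sum {ι κ τ : Type*} (s : Finset ι) (t : Finset κ) (r : Finset τ)
    (S : ι → G →L[𝕜] F) (T : κ → G →L[𝕜] M) (R : τ → E →L[𝕜] M) :
    (∑ i ∈ s, S i) ∘L adjoint (∑ j ∈ t, T j) ∘L ∑ k ∈ r, R k =
      ∑ i ∈ s, ∑ j ∈ t, ∑ k ∈ r, S i ∘L adjoint (T j) ∘L R k := by
  simp_rw [map_sum, finsetSum_comp, comp_finsetSum]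

end TripleProduct

section TernaryHom

variable {K₁ L₁ H₂ K₂ H K L : Type*}
  [NormedAddCommGroup K₁] [InnerProductSpace ℂ K₁] [CompleteSpace K₁]
  [NormedAddCommGroup L₁] [InnerProductSpace ℂ L₁] [CompleteSpace L₁]
  [NormedAddCommGroup H₂] [InnerProductSpace ℂ H₂] [CompleteSpace H₂]
  [NormedAddCommGroup K₂] [InnerProductSpace ℂ K₂] [CompleteSpace K₂]
  [NormedAddCommGroup H] [InnerProductSpace ℂ H] [CompleteSpace H]
  [NormedAddCommGroup K] [InnerProductSpace ℂ K] [CompleteSpace K]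
  [NormedAddCommGroup L] [InnerProductSpace ℂ L] [CompleteSpace L]
  {𝒰 : Submodule ℂ (K₁ →L[ℂ] L₁)} {𝒱 : Submodule ℂ (H₂ →L[ℂ] K₂)}
  {φ : 𝒰 →ₗ[ℂ] K →L[ℂ] L} {ψ : 𝒱 →ₗ[ℂ] H →L[ℂ] K}

theorem IsTernaryHom.map_triple_comp_map_triple
    (hφ : IsTernaryHom 𝒰 φ) (hψ : IsTernaryHom 𝒱 ψ) (hsemi : SemiCommute φ ψ)
    (u₁ u₂ u₃ : 𝒰) (v₁ v₂ v₃ : 𝒱)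
    (hu : (u₁ : K₁ →L[ℂ] L₁) ∘L adjoint (u₂ : K₁ →L[ℂ] L₁) ∘L (u₃ : K₁ →L[ℂ] L₁) ∈ 𝒰)
    (hv : (v₁ : H₂ →L[ℂ] K₂) ∘L adjoint (v₂ : H₂ →L[ℂ] K₂) ∘L (v₃ : H₂ →L[ℂ] K₂) ∈ 𝒱) :
    φ ⟨_, hu⟩ ∘L ψ ⟨_, hv⟩ =
      (φ u₁ ∘L ψ v₁) ∘L adjoint (φ u₂ ∘L ψ v₂) ∘L (φ u₃ ∘L ψ v₃) := by
  rw [hφ, hψ]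
  exact triple_comp_triple_of_commute (hsemi u₂ u₃ v₁ v₂) (φ u₁) (ψ v₃)

theorem statement2_general
    (h𝒰tro : ∀ S ∈ 𝒰, ∀ T ∈ 𝒰, ∀ R ∈ 𝒰, S ∘L adjoint T ∘L R ∈ 𝒰)
    (h𝒱tro : ∀ S ∈ 𝒱, ∀ T ∈ 𝒱, ∀ R ∈ 𝒱, S ∘L adjoint T ∘L R ∈ 𝒱)
    (hφ : IsTernaryHom 𝒰 φ) (hψ : IsTernaryHom 𝒱 ψ) (hsemi : SemiCommute φ ψ)
    {ι₁ ι₂ ι₃ : Type*} (s₁ : Finset ι₁) (s₂ : Finset ι₂) (s₃ : Finset ι₃)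
    (u₁ : ι₁ → 𝒰) (u₂ : ι₂ → 𝒰) (u₃ : ι₃ → 𝒰) (v₁ : ι₁ → 𝒱) (v₂ : ι₂ → 𝒱) (v₃ : ι₃ → 𝒱) :
    ∑ j ∈ s₁, ∑ k ∈ s₂, ∑ l ∈ s₃,
        φ ⟨_, h𝒰tro _ (u₁ j).2 _ (u₂ k).2 _ (u₃ l).2⟩ ∘L
          ψ ⟨_, h𝒱tro _ (v₁ j).2 _ (v₂ k).2 _ (v₃ l).2⟩ =
      (∑ j ∈ s₁, φ (u₁ j) ∘L ψ (v₁ j)) ∘L adjoint (∑ k ∈ s₂, φ (u₂ k) ∘L ψ (v₂ k)) ∘L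
        ∑ l ∈ s₃, φ (u₃ l) ∘L ψ (v₃ l) := by
  simp only [hφ.map_triple_comp_map_triple hψ hsemi, sum_comp_adjoint_sum_comp_sum]

end TernaryHom

/-- For semi-commuting ternary morphisms `φ`, `ψ` of TROs `𝒰`, `𝒱`,
the product `u ⊗ v ↦ φ(u)ψ(v)` is a ternary morphism of the tensor product:
the triple-sum identity holds. -/
theorem statement2
    {K₁ L₁ H₂ K₂ H K L : Type*}
    [NormedAddCommGroup K₁] [InnerProductSpace ℂ K₁] [CompleteSpace K₁]
    [NormedAddCommGroup L₁] [InnerProductSpace ℂ L₁] [CompleteSpace L₁]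
    [NormedAddCommGroup H₂] [InnerProductSpace ℂ H₂] [CompleteSpace H₂]
    [NormedAddCommGroup K₂] [InnerProductSpace ℂ K₂] [CompleteSpace K₂]
    [NormedAddCommGroup H] [InnerProductSpace ℂ H] [CompleteSpace H]
    [NormedAddCommGroup K] [InnerProductSpace ℂ K] [CompleteSpace K]
    [NormedAddCommGroup L] [InnerProductSpace ℂ L] [CompleteSpace L]
    (𝒰 : Submodule ℂ (K₁ →L[ℂ] L₁)) (𝒱 : Submodule ℂ (H₂ →L[ℂ] K₂))
    (h𝒰closed : IsClosed (𝒰 : Set (K₁ →L[ℂ] L₁)))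
    (h𝒱closed : IsClosed (𝒱 : Set (H₂ →L[ℂ] K₂)))
    (h𝒰tro : ∀ S ∈ 𝒰, ∀ T ∈ 𝒰, ∀ R ∈ 𝒰, S ∘L (adjoint T) ∘L R ∈ 𝒰)
    (h𝒱tro : ∀ S ∈ 𝒱, ∀ T ∈ 𝒱, ∀ R ∈ 𝒱, S ∘L (adjoint T) ∘L R ∈ 𝒱)
    (φ : ↥𝒰 →ₗ[ℂ] (K →L[ℂ] L)) (ψ : ↥𝒱 →ₗ[ℂ] (H →L[ℂ] K))
    (hφ : IsTernaryHom 𝒰 φ) (hψ : IsTernaryHom 𝒱 ψ)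
    (hsemi : ∀ (u₁ u₂ : 𝒰) (v₁ v₂ : 𝒱),
      Commute ((adjoint (φ u₁)) ∘L (φ u₂)) ((ψ v₁) ∘L (adjoint (ψ v₂))))
    (p : ℕ) (u₁ u₂ u₃ : Fin p → 𝒰) (v₁ v₂ v₃ : Fin p → 𝒱) :
    ∑ j, ∑ k, ∑ l,
        (φ ⟨((u₁ j : K₁ →L[ℂ] L₁)) ∘L (adjoint (u₂ k : K₁ →L[ℂ] L₁)) ∘L
              ((u₃ l : K₁ →L[ℂ] L₁)),
            h𝒰tro _ (u₁ j).2 _ (u₂ k).2 _ (u₃ l).2⟩) ∘L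
          (ψ ⟨((v₁ j : H₂ →L[ℂ] K₂)) ∘L (adjoint (v₂ k : H₂ →L[ℂ] K₂)) ∘L
              ((v₃ l : H₂ →L[ℂ] K₂)),
            h𝒱tro _ (v₁ j).2 _ (v₂ k).2 _ (v₃ l).2⟩)
      = (∑ j, (φ (u₁ j)) ∘L (ψ (v₁ j))) ∘L
          (adjoint (∑ k, (φ (u₂ k)) ∘L (ψ (v₂ k)))) ∘L
          (∑ l, (φ (u₃ l)) ∘L (ψ (v₃ l))) := by
  exact statement2_general h𝒰tro h𝒱tro hφ hψ hsemi _ _ _ u₁ u₂ u₃ v₁ v₂ v₃
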